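/- Let t_n denote the cardinality of NC(T_n). For every n ≥ 2, t_n = 2·t_{n−1} + 2^{n−2}. -/

import Mathlib

open Finset

/-- A finpartition of a finite set of points in the plane is *noncrossing* if the
convex hulls (over `ℝ`) of its blocks are pairwise disjoint. -/
def IsNoncrossing {P : Finset ℂ} (π : Finpartition P) : Prop :=
  (π.parts : Set (Finset ℂ)).Pairwise fun B₁ B₂ =>
    Disjoint (convexHull ℝ (B₁ : Set ℂ)) (convexHull ℝ (B₂ : Set ℂ))

/-- The poset `NC(P)` of noncrossing partitions of `P`, ordered by refinement:
`π ≤ μ` iff every block of `μ` is a union of blocks of `π`. -/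
abbrev NC (P : Finset ℂ) : Type := {π : Finpartition P // IsNoncrossing π}

/-- The blocks of a noncrossing partition. -/
def NC.parts {P : Finset ℂ} (π : NC P) : Finset (Finset ℂ) := π.1.parts

/-- Two points lie in a common block of a noncrossing partition. -/
def NC.SameBlock {P : Finset ℂ} (π : NC P) (a b : ℂ) : Prop :=
  ∃ B ∈ π.parts, a ∈ B ∧ b ∈ B

/-- The configuration `T_n = {1, …, n} ∪ {i} ⊆ ℂ`: the points `x_k = k` for
`1 ≤ k ≤ n` together with `y = i`. -/
noncomputable def Tconfig (n : ℕ) : Finset ℂ :=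
  ((Finset.Icc 1 n).image fun k : ℕ => (k : ℂ)) ∪ {Complex.I}

/-- Number of elements of `C` below `k`. -/
def cntB (C : Finset ℕ) (k : ℕ) : ℕ := (C.filter (fun j => j < k)).card

/-- Real version of `cntB`. -/
noncomputable def cntR (C : Finset ℕ) (x : ℝ) : ℕ := (C.filter (fun j : ℕ => (j : ℝ) < x)).card

theorem cntR_natCast (C : Finset ℕ) (k : ℕ) : cntR C (k : ℝ) = cntB C k := by
  simp [cntR, cntB]

theorem cntR_mono (C : Finset ℕ) : Monotone (cntR C) := by
  intro x y h
  refine Finset.card_le_card fun j hj => ?_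
  simp only [Finset.mem_filter] at hj ⊢
  exact ⟨hj.1, hj.2.trans_le h⟩

theorem cntB_mono (C : Finset ℕ) : Monotone (cntB C) := by
  intro x y h
  refine Finset.card_le_card fun j hj => ?_
  simp only [Finset.mem_filter] at hj ⊢
  exact ⟨hj.1, hj.2.trans_le h⟩

theorem cntB_succ (C : Finset ℕ) (k : ℕ) :
    cntB C (k + 1) = cntB C k + if k ∈ C then 1 else 0 := by
  unfold cntB
  split_ifs with h
  · have : C.filter (fun j => j < k + 1) = insert k (C.filter (fun j => j < k)) := by
      ext j
      simp only [Finset.mem_filter, Finset.mem_insert]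
      constructor
      · rintro ⟨a, b⟩
        by_cases hjk : j = k
        · exact Or.inl hjk
        · exact Or.inr ⟨a, by omega⟩
      · rintro (rfl | ⟨a, b⟩)
        · exact ⟨h, by omega⟩
        · exact ⟨a, by omega⟩
    rw [this, Finset.card_insert_of_notMem (by simp)]
  · congr 1
    ext j
    simp only [Finset.mem_filter]
    constructor
    · rintro ⟨a, b⟩
      have : j ≠ k := by rintro rfl; exact h a
      exact ⟨a, by omega⟩
    · rintro ⟨a, b⟩
      exact ⟨a, by omega⟩

theorem cntB_le (C : Finset ℕ) (k : ℕ) : cntB C k ≤ C.card :=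
  Finset.card_le_card (Finset.filter_subset _ _)

theorem cntB_surj {C : Finset ℕ} {n : ℕ} (hn : 1 ≤ n) (hC : C ⊆ Finset.Ico 1 n) {v : ℕ}
    (hv : v ≤ C.card) : ∃ k, 1 ≤ k ∧ k ≤ n ∧ cntB C k = v := by
  have h1 : cntB C 1 = 0 := by
    unfold cntB
    rw [Finset.card_eq_zero, Finset.filter_eq_empty_iff]
    intro j hj
    have := Finset.mem_Ico.1 (hC hj)
    omega
  have h2 : cntB C n = C.card := by
    unfold cntB
    congr 1
    rw [Finset.filter_eq_self]
    intro j hj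
    exact (Finset.mem_Ico.1 (hC hj)).2
  have key : ∀ m, 1 ≤ m → ∀ v ≤ cntB C m, ∃ k, 1 ≤ k ∧ k ≤ m ∧ cntB C k = v := by
    intro m hm
    induction m, hm using Nat.le_induction with
    | base => intro v hv; exact ⟨1, le_rfl, le_rfl, by omega⟩
    | succ m hm ih =>
      intro v hv
      by_cases h : v ≤ cntB C m
      · obtain ⟨k, a, b, c⟩ := ih v h
        exact ⟨k, a, by omega, c⟩
      · refine ⟨m + 1, by omega, le_rfl, ?_⟩
        have := cntB_succ C m
        split_ifs at this <;> omega
  exact key n hn v (by omega)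

/-- Labels of the points of the plane. -/
noncomputable def labT (C : Finset ℕ) (v : ℕ) (z : ℂ) : ℕ :=
  if z = Complex.I then v else cntR C z.re

theorem natCast_ne_I (k : ℕ) : (k : ℂ) ≠ Complex.I := by
  intro h
  have := congrArg Complex.im h
  simp at this

theorem labT_I (C : Finset ℕ) (v : ℕ) : labT C v Complex.I = v := by simp [labT]

theorem labT_nat (C : Finset ℕ) (v k : ℕ) : labT C v (k : ℂ) = cntB C k := by
  rw [labT, if_neg (natCast_ne_I k), Complex.natCast_re, cntR_natCast]

theorem mem_Tconfig {n : ℕ} {z : ℂ} :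
    z ∈ Tconfig n ↔ (∃ k : ℕ, 1 ≤ k ∧ k ≤ n ∧ z = k) ∨ z = Complex.I := by
  simp only [Tconfig, Finset.mem_union, Finset.mem_image, Finset.mem_Icc, Finset.mem_singleton]
  constructor
  · rintro (⟨k, h, rfl⟩ | h)
    · exact Or.inl ⟨k, h.1, h.2, rfl⟩
    · exact Or.inr h
  · rintro (⟨k, h1, h2, rfl⟩ | h)
    · exact Or.inl ⟨k, ⟨h1, h2⟩, rfl⟩
    · exact Or.inr h

/-- The partition by labels. -/
noncomputable def partT (n : ℕ) (C : Finset ℕ) (v : ℕ) : Finpartition (Tconfig n) :=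
  haveI : DecidableRel (Setoid.ker (labT C v)).r := Classical.decRel _
  Finpartition.ofSetSetoid (Setoid.ker (labT C v)) (Tconfig n)

theorem mem_partT {n : ℕ} {C : Finset ℕ} {v : ℕ} {a b : ℂ} :
    b ∈ (partT n C v).part a ↔ a ∈ Tconfig n ∧ b ∈ Tconfig n ∧ labT C v a = labT C v b := by
  unfold partT
  rw [Finpartition.mem_part_ofSetSetoid_iff_rel]
  rfl

/-- Convex region for a label. -/
def regT (C : Finset ℕ) (v p : ℕ) : Set ℂ :=
  {z | 0 ≤ z.im ∧ (p ≠ v → z.im = 0) ∧ (z.im = 0 → cntR C z.re = p)}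

theorem regT_convex (C : Finset ℕ) (v p : ℕ) : Convex ℝ (regT C v p) := by
  intro z hz w hw a b ha hb hab
  rcases ha.eq_or_lt with rfl | ha
  · have : b = 1 := by linarith
    subst this; simpa using hw
  rcases hb.eq_or_lt with rfl | hb
  · have : a = 1 := by linarith
    subst this; simpa using hz
  obtain ⟨z1, z2, z3⟩ := hz
  obtain ⟨w1, w2, w3⟩ := hw
  have him : (a • z + b • w).im = a * z.im + b * w.im := by simp
  have hre : (a • z + b • w).re = a * z.re + b * w.re := by simp
  refine ⟨?_, ?_, ?_⟩
  · rw [him]; positivity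
  · intro h; rw [him, z2 h, w2 h]; simp
  · rw [him, hre]
    intro h
    have h1 : 0 ≤ a * z.im := by positivity
    have h2 : 0 ≤ b * w.im := by positivity
    have e1 : a * z.im = 0 := by linarith
    have e2 : b * w.im = 0 := by linarith
    have f1 := z3 ((mul_eq_zero.1 e1).resolve_left ha.ne')
    have f2 := w3 ((mul_eq_zero.1 e2).resolve_left hb.ne')
    have hc : Convex ℝ (Set.Icc (min z.re w.re) (max z.re w.re)) := convex_Icc _ _
    have hm := hc (x := z.re) ⟨min_le_left _ _, le_max_left _ _⟩ (y := w.re)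
      ⟨min_le_right _ _, le_max_right _ _⟩ ha.le hb.le hab
    simp only [smul_eq_mul] at hm
    have g1 := cntR_mono C hm.1
    have g2 := cntR_mono C hm.2
    rw [(cntR_mono C).map_min, f1, f2, min_self] at g1
    rw [(cntR_mono C).map_max, f1, f2, max_self] at g2
    exact le_antisymm g2 g1

theorem regT_disjoint (C : Finset ℕ) (v : ℕ) {p q : ℕ} (h : p ≠ q) :
    Disjoint (regT C v p) (regT C v q) := by
  rw [Set.disjoint_left]
  rintro z ⟨_, a2, a3⟩ ⟨_, b2, b3⟩
  have : z.im = 0 := by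
    by_cases hp : p = v
    · exact b2 (by omega)
    · exact a2 hp
  exact h ((a3 this).symm.trans (b3 this))

theorem mem_regT {n : ℕ} (C : Finset ℕ) (v : ℕ) {z : ℂ} (hz : z ∈ Tconfig n) :
    z ∈ regT C v (labT C v z) := by
  rcases mem_Tconfig.1 hz with ⟨k, _, _, rfl⟩ | rfl
  · rw [labT_nat]
    refine ⟨by simp, by simp, ?_⟩
    intro _
    rw [Complex.natCast_re, cntR_natCast]
  · rw [labT_I]
    exact ⟨by simp, by simp, by simp⟩

theorem partT_noncrossing (n : ℕ) (C : Finset ℕ) (v : ℕ) : IsNoncrossing (partT n C v) := by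
  intro B₁ h₁ B₂ h₂ hne
  obtain ⟨a, ha, rfl⟩ := (partT n C v).part_surjOn h₁
  obtain ⟨b, hb, rfl⟩ := (partT n C v).part_surjOn h₂
  have hlab : labT C v a ≠ labT C v b := by
    intro h
    apply hne
    rw [← Finpartition.mem_part_iff_part_eq_part _ ha hb, mem_partT]
    exact ⟨hb, ha, h.symm⟩
  have hsub : ∀ c, convexHull ℝ ((partT n C v).part c : Set ℂ) ⊆ regT C v (labT C v c) := by
    intro c
    refine convexHull_min ?_ (regT_convex _ _ _)
    intro z hz
    obtain ⟨_, hz, h⟩ := mem_partT.1 (Finset.mem_coe.1 hz)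
    rw [h]
    exact mem_regT C v hz
  exact (regT_disjoint C v hlab).mono (hsub a) (hsub b)

theorem finpart_ext {P : Finset ℂ} (π σ : Finpartition P)
    (h : ∀ a ∈ P, ∀ b ∈ P, (b ∈ π.part a ↔ b ∈ σ.part a)) : π = σ := by
  have hp : ∀ a ∈ P, π.part a = σ.part a := by
    intro a ha
    ext b
    by_cases hb : b ∈ P
    · exact h a ha b hb
    · exact ⟨fun hx => absurd (π.part_subset a hx) hb, fun hx => absurd (σ.part_subset a hx) hb⟩
  ext B
  constructor
  · intro hB
    obtain ⟨a, ha, rfl⟩ := π.part_surjOn hB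
    rw [hp a ha]; exact σ.part_mem.2 ha
  · intro hB
    obtain ⟨a, ha, rfl⟩ := σ.part_surjOn hB
    rw [← hp a ha]; exact π.part_mem.2 ha

theorem natCast_mem_T {n k : ℕ} (h1 : 1 ≤ k) (h2 : k ≤ n) : (k : ℂ) ∈ Tconfig n :=
  mem_Tconfig.2 (Or.inl ⟨k, h1, h2, rfl⟩)

theorem I_mem_T {n : ℕ} : Complex.I ∈ Tconfig n := mem_Tconfig.2 (Or.inr rfl)

theorem partT_inj {n : ℕ} (hn : 1 ≤ n) {C D : Finset ℕ} {v w : ℕ}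
    (hC : C ⊆ Finset.Ico 1 n) (hD : D ⊆ Finset.Ico 1 n) (hv : v < C.card + 2)
    (hw : w < D.card + 2) (h : partT n C v = partT n D w) : C = D ∧ v = w := by
  have rel : ∀ a ∈ Tconfig n, ∀ b ∈ Tconfig n,
      (labT C v a = labT C v b ↔ labT D w a = labT D w b) := by
    intro a ha b hb
    have h1 := mem_partT (n := n) (C := C) (v := v) (a := a) (b := b)
    rw [h, mem_partT] at h1
    simpa [ha, hb] using h1.symm
  have hCD : C = D := by
    ext k
    by_cases hk : k ∈ Finset.Ico 1 n
    · have hk' := Finset.mem_Ico.1 hk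
      have := rel k (natCast_mem_T hk'.1 hk'.2.le) ((k + 1 : ℕ) : ℂ)
        (natCast_mem_T (by omega) hk'.2)
      simp only [labT_nat, cntB_succ] at this
      by_cases c1 : k ∈ C <;> by_cases c2 : k ∈ D <;> simp_all
    · exact ⟨fun hx => absurd (hC hx) hk, fun hx => absurd (hD hx) hk⟩
  subst hCD
  refine ⟨rfl, ?_⟩
  by_cases h1 : v ≤ C.card
  · obtain ⟨k, a, b, c⟩ := cntB_surj hn hC h1
    have := rel k (natCast_mem_T a b) Complex.I I_mem_T
    simp only [labT_nat, labT_I] at this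
    have := this.1 c
    omega
  · by_cases h2 : w ≤ C.card
    · obtain ⟨k, a, b, c⟩ := cntB_surj hn hC h2
      have := rel k (natCast_mem_T a b) Complex.I I_mem_T
      simp only [labT_nat, labT_I] at this
      have := this.2 c
      omega
    · omega

theorem partT_surj {n : ℕ} (π : Finpartition (Tconfig n)) (hπ : IsNoncrossing π) :
    ∃ C v, C ⊆ Finset.Ico 1 n ∧ v < C.card + 2 ∧ partT n C v = π := by
  classical
  have conv : ∀ k j l : ℕ, 1 ≤ k → k ≤ j → j ≤ l → l ≤ n →
      π.part (k : ℂ) = π.part (l : ℂ) → π.part (j : ℂ) = π.part (k : ℂ) := by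
    intro k j l h1 h2 h3 h4 h
    have hk := natCast_mem_T (n := n) h1 (by omega : k ≤ n)
    have hj := natCast_mem_T (n := n) (by omega : 1 ≤ j) (by omega : j ≤ n)
    have hl := natCast_mem_T (n := n) (by omega : 1 ≤ l) h4
    by_contra hne
    have hd := hπ (π.part_mem.2 hj) (π.part_mem.2 hk) hne
    refine Set.disjoint_left.1 hd (subset_convexHull ℝ _ (Finset.mem_coe.2 (π.mem_part hj))) ?_
    have m1 : (k : ℂ) ∈ convexHull ℝ (π.part (k : ℂ) : Set ℂ) :=
      subset_convexHull ℝ _ (Finset.mem_coe.2 (π.mem_part hk))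
    have m2 : (l : ℂ) ∈ convexHull ℝ (π.part (k : ℂ) : Set ℂ) :=
      subset_convexHull ℝ _ (Finset.mem_coe.2 (by rw [h]; exact π.mem_part hl))
    rcases (h2.trans h3).eq_or_lt with hkl | hkl
    · have : j = k := by omega
      rw [this]; exact m1
    · have hpos : (0 : ℝ) < (l : ℝ) - k := by
        have : (k : ℝ) < l := by exact_mod_cast hkl
        linarith
      have q1 : (0 : ℝ) ≤ (l : ℝ) - j := by
        have : (j : ℝ) ≤ l := by exact_mod_cast h3
        linarith
      have q2 : (0 : ℝ) ≤ (j : ℝ) - k := by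
        have : (k : ℝ) ≤ j := by exact_mod_cast h2
        linarith
      have := (convex_convexHull ℝ (π.part (k : ℂ) : Set ℂ)) m1 m2
        (a := ((l : ℝ) - j) / (l - k)) (b := ((j : ℝ) - k) / (l - k))
        (div_nonneg q1 hpos.le) (div_nonneg q2 hpos.le) (by field_simp; ring)
      convert this using 1
      apply Complex.ext
      · simp only [Complex.add_re, Complex.real_smul, Complex.re_ofReal_mul, Complex.natCast_re]
        field_simp
        ring
      · simp only [Complex.add_im, Complex.real_smul, Complex.im_ofReal_mul, Complex.natCast_im]
        ring
  let C : Finset ℕ := (Finset.Ico 1 n).filter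
    (fun k => π.part (k : ℂ) ≠ π.part ((k + 1 : ℕ) : ℂ))
  have hCsub : C ⊆ Finset.Ico 1 n := Finset.filter_subset _ _
  have memC : ∀ k, 1 ≤ k → k < n →
      (k ∈ C ↔ π.part (k : ℂ) ≠ π.part ((k + 1 : ℕ) : ℂ)) := by
    intro k h1 h2
    simp only [C, Finset.mem_filter, Finset.mem_Ico]
    tauto
  have line_le : ∀ k l : ℕ, 1 ≤ k → k ≤ l → l ≤ n →
      (cntB C k = cntB C l ↔ π.part (k : ℂ) = π.part (l : ℂ)) := by
    intro k l h1 h2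
    induction l, h2 using Nat.le_induction with
    | base => intro _; simp
    | succ l hl ih =>
      intro h4
      have ih := ih (by omega)
      have hs := cntB_succ C l
      have hm := cntB_mono C hl
      have hmem := memC l (by omega) (by omega)
      constructor
      · intro h
        have hlC : l ∉ C := by
          intro hx; rw [if_pos hx] at hs; omega
        rw [if_neg hlC] at hs
        rw [ih.1 (by omega)]
        by_contra hx
        exact hlC (hmem.2 hx)
      · intro h
        have e := conv k l (l + 1) h1 hl (by omega) h4 h
        have hlC : l ∉ C := by
          intro hx; exact hmem.1 hx (e.trans h)
        rw [if_neg hlC] at hs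
        have := ih.2 e.symm
        omega
  have line : ∀ k l : ℕ, 1 ≤ k → k ≤ n → 1 ≤ l → l ≤ n →
      (cntB C k = cntB C l ↔ π.part (k : ℂ) = π.part (l : ℂ)) := by
    intro k l h1 h2 h3 h4
    rcases le_total k l with h | h
    · exact line_le k l h1 h h4
    · rw [eq_comm, line_le l k h3 h h2, eq_comm]
  have hv : ∃ v, v < C.card + 2 ∧ ∀ k : ℕ, 1 ≤ k → k ≤ n →
      (cntB C k = v ↔ π.part (k : ℂ) = π.part Complex.I) := by
    by_cases hI : ∃ k : ℕ, 1 ≤ k ∧ k ≤ n ∧ π.part (k : ℂ) = π.part Complex.I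
    · obtain ⟨k, a, b, c⟩ := hI
      refine ⟨cntB C k, by have := cntB_le C k; omega, ?_⟩
      intro l hl1 hl2
      rw [line l k hl1 hl2 a b, c]
    · refine ⟨C.card + 1, by omega, ?_⟩
      intro l hl1 hl2
      have := cntB_le C l
      constructor
      · intro h; omega
      · intro h; exact absurd ⟨l, hl1, hl2, h⟩ hI
  obtain ⟨v, hv1, hv2⟩ := hv
  refine ⟨C, v, hCsub, hv1, ?_⟩
  apply finpart_ext
  intro a ha b hb
  rw [mem_partT, π.mem_part_iff_part_eq_part hb ha]
  have : labT C v a = labT C v b ↔ π.part b = π.part a := by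
    rcases mem_Tconfig.1 ha with ⟨k, k1, k2, rfl⟩ | rfl <;>
    rcases mem_Tconfig.1 hb with ⟨l, l1, l2, rfl⟩ | rfl
    · rw [labT_nat, labT_nat, line k l k1 k2 l1 l2, eq_comm]
    · rw [labT_nat, labT_I, hv2 k k1 k2, eq_comm]
    · rw [labT_nat, labT_I, eq_comm, hv2 l l1 l2]
    · simp
  rw [this]
  tauto

theorem card_NC_T {n : ℕ} (hn : 1 ≤ n) :
    Nat.card (NC (Tconfig n)) = ∑ C ∈ (Finset.Ico 1 n).powerset, (C.card + 2) := by
  let S : Finset (Σ _ : Finset ℕ, ℕ) :=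
    (Finset.Ico 1 n).powerset.sigma fun C => Finset.range (C.card + 2)
  have hS : ∀ x : S, x.1.1 ⊆ Finset.Ico 1 n ∧ x.1.2 < x.1.1.card + 2 := by
    intro x
    have := Finset.mem_sigma.1 x.2
    exact ⟨Finset.mem_powerset.1 this.1, Finset.mem_range.1 this.2⟩
  let F : S → NC (Tconfig n) := fun x => ⟨partT n x.1.1 x.1.2, partT_noncrossing _ _ _⟩
  have hF : Function.Bijective F := by
    constructor
    · rintro x y h
      have h' : partT n x.1.1 x.1.2 = partT n y.1.1 y.1.2 := congrArg Subtype.val h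
      obtain ⟨e1, e2⟩ := partT_inj hn (hS x).1 (hS y).1 (hS x).2 (hS y).2 h'
      apply Subtype.ext
      exact Sigma.ext e1 (heq_of_eq e2)
    · rintro ⟨π, hπ⟩
      obtain ⟨C, v, h1, h2, h3⟩ := partT_surj π hπ
      refine ⟨⟨⟨C, v⟩, Finset.mem_sigma.2 ⟨Finset.mem_powerset.2 h1, Finset.mem_range.2 h2⟩⟩, ?_⟩
      exact Subtype.ext h3
  rw [← Nat.card_eq_of_bijective F hF, Nat.card_eq_fintype_card, Fintype.card_coe,
    Finset.card_sigma]
  simp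

/-- For `n ≥ 2`, `t_n = 2 t_{n-1} + 2 ^ (n - 2)` where `t_n = |NC(T_n)|`. -/
theorem nc_T_card_recursion (n : ℕ) (hn : 2 ≤ n) :
    Nat.card (NC (Tconfig n)) = 2 * Nat.card (NC (Tconfig (n - 1))) + 2 ^ (n - 2) := by
  obtain ⟨m, rfl⟩ : ∃ m, n = m + 2 := ⟨n - 2, by omega⟩
  have e : m + 2 - 1 = m + 1 := rfl
  rw [e, card_NC_T (by omega), card_NC_T (by omega)]
  have hins : Finset.Ico 1 (m + 2) = insert (m + 1) (Finset.Ico 1 (m + 1)) := by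
    ext j
    simp only [Finset.mem_Ico, Finset.mem_insert]
    omega
  have hnot : m + 1 ∉ Finset.Ico 1 (m + 1) := by simp
  rw [hins, Finset.sum_powerset_insert hnot]
  have h2 : ∑ t ∈ (Finset.Ico 1 (m + 1)).powerset, ((insert (m + 1) t).card + 2) =
      ∑ t ∈ (Finset.Ico 1 (m + 1)).powerset, ((t.card + 2) + 1) := by
    refine Finset.sum_congr rfl fun t ht => ?_
    rw [Finset.card_insert_of_notMem fun h => hnot (Finset.mem_powerset.1 ht h)]
  rw [h2, Finset.sum_add_distrib (g := fun _ => 1), Finset.sum_const, Finset.card_powerset]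
  simp only [Nat.card_Ico, smul_eq_mul, mul_one, Nat.add_sub_cancel]
  ring
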